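/- arXiv:1808.03101 — 4 statements merged into one kernel-verified Lean document; each statement's English description precedes it below -/
import Mathlib

section
/- Let (X, 𝔖, μ) be a space with a σ-finite measure, Y a set, and for each y ∈ Y let ρ(·; y) and f(·; y) be 𝔖-measurable functions from X to [0, +∞]. Fix y₀ ∈ Y and γ ∈ (0, +∞), and suppose that the integral ∫_X ρ(x; y₀) f(x; y)^γ dμ attains its supremum over y ∈ Y at the point y = y₀ (the value +∞ is not excluded). Then for every α > 0 and β ≥ 0 with α + β = γ, one has sup_{y ∈ Y} ∫_X ρ(x; y₀) f(x; y)^α f(x; y₀)^β dμ = ∫_X ρ(x; y₀) f(x; y₀)^γ dμ. -/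
open MeasureTheory ENNReal

/-!
Put `s = α / γ` and `t = β / γ`, so that `s + t = 1`. Writing `w = ρ(·; y₀)`, pointwise
`w * f(y) ^ α * f(y₀) ^ β = (w * f(y) ^ γ) ^ s * (w * f(y₀) ^ γ) ^ t`, so Hölder's inequality bounds
each integral in the supremum by `(∫ w * f(y) ^ γ) ^ s * (∫ w * f(y₀) ^ γ) ^ t`, and the extremality
of `y₀` bounds this by `∫ w * f(y₀) ^ γ`. Taking `y = y₀` gives the reverse inequality. All
exponents are nonnegative, so the rules for powers used here hold at `0` and `∞` as well.
-/

/-- **Proposition 1** (Kresin–Maz'ya): if `∫ ρ(x;y₀) f(x;y)^γ dμ` attains its supremum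
over `y ∈ Y` at `y = y₀`, then for all `α > 0`, `β ≥ 0` with `α + β = γ`,
`sup_{y} ∫ ρ(x;y₀) f(x;y)^α f(x;y₀)^β dμ = ∫ ρ(x;y₀) f(x;y₀)^γ dμ`. -/
theorem stmt_0 {X : Type*} [MeasurableSpace X] (μ : Measure X) [SigmaFinite μ]
    {Y : Type*} (ρ f : X → Y → ℝ≥0∞)
    (hρ : ∀ y : Y, Measurable fun x => ρ x y)
    (hf : ∀ y : Y, Measurable fun x => f x y)
    (y₀ : Y) (γ : ℝ) (hγ : 0 < γ)
    (hsup : ∀ y : Y, ∫⁻ x, ρ x y₀ * f x y ^ γ ∂μ ≤ ∫⁻ x, ρ x y₀ * f x y₀ ^ γ ∂μ)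
    (α β : ℝ) (hα : 0 < α) (hβ : 0 ≤ β) (hαβ : α + β = γ) :
    (⨆ y : Y, ∫⁻ x, ρ x y₀ * f x y ^ α * f x y₀ ^ β ∂μ)
      = ∫⁻ x, ρ x y₀ * f x y₀ ^ γ ∂μ := by
  have hs : 0 ≤ α / γ := by positivity
  have ht : 0 ≤ β / γ := by positivity
  have hst : α / γ + β / γ = 1 := by rw [← add_div, hαβ, div_self hγ.ne']
  have key : ∀ w a b : ℝ≥0∞,
      w * a ^ α * b ^ β = (w * a ^ γ) ^ (α / γ) * (w * b ^ γ) ^ (β / γ) := by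
    intro w a b
    have hw : w ^ (α / γ) * w ^ (β / γ) = w := by
      rw [← ENNReal.rpow_add_of_nonneg _ _ hs ht, hst, ENNReal.rpow_one]
    rw [ENNReal.mul_rpow_of_nonneg _ _ hs, ENNReal.mul_rpow_of_nonneg _ _ ht,
      ← ENNReal.rpow_mul, ← ENNReal.rpow_mul, mul_div_cancel₀ _ hγ.ne',
      mul_div_cancel₀ _ hγ.ne', mul_mul_mul_comm, hw, mul_assoc]
  apply le_antisymm
  · refine iSup_le fun y => ?_
    have hm : ∀ z : Y, AEMeasurable (fun x => ρ x y₀ * f x z ^ γ) μ := fun z =>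
      ((hρ y₀).mul ((hf z).pow_const γ)).aemeasurable
    calc ∫⁻ x, ρ x y₀ * f x y ^ α * f x y₀ ^ β ∂μ
        = ∫⁻ x, (ρ x y₀ * f x y ^ γ) ^ (α / γ) * (ρ x y₀ * f x y₀ ^ γ) ^ (β / γ) ∂μ :=
          lintegral_congr fun x => key _ _ _
      _ ≤ (∫⁻ x, ρ x y₀ * f x y ^ γ ∂μ) ^ (α / γ)
          * (∫⁻ x, ρ x y₀ * f x y₀ ^ γ ∂μ) ^ (β / γ) :=
          ENNReal.lintegral_mul_norm_pow_le (hm y) (hm y₀) hs ht hst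
      _ ≤ (∫⁻ x, ρ x y₀ * f x y₀ ^ γ ∂μ) ^ (α / γ)
          * (∫⁻ x, ρ x y₀ * f x y₀ ^ γ ∂μ) ^ (β / γ) :=
          mul_le_mul_left (ENNReal.rpow_le_rpow (hsup y) hs) _
      _ = ∫⁻ x, ρ x y₀ * f x y₀ ^ γ ∂μ := by
          rw [← ENNReal.rpow_add_of_nonneg _ _ hs ht, hst, ENNReal.rpow_one]
  · refine le_iSup_of_le y₀ (lintegral_mono fun x => ?_)
    rw [mul_assoc, ← ENNReal.rpow_add_of_nonneg _ _ hα.le hβ, hαβ]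
end

section
/- Let (X, 𝔖, μ) be a space with a σ-finite measure, Y a set, and for each y ∈ Y let ρ(·; y) and f(·; y) be 𝔖-measurable functions from X to [0, +∞]. Fix γ > 0 and α > 0, β ≥ 0 with α + β = γ. Suppose that for every y₀ ∈ Y the integral ∫_X ρ(x; y₀) f(x; y)^γ dμ attains its supremum over y ∈ Y at y = y₀, and that the value of ∫_X ρ(x; y) f(x; y)^γ dμ does not depend on y ∈ Y. Then the quantity sup_{y ∈ Y} ∫_X ρ(x; y₀) f(x; y)^α f(x; y₀)^β dμ is independent of the choice of y₀ ∈ Y. -/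
/-!
Both suprema equal the common value `C` of `∫ ρ(x;y) f(x;y)^γ dμ`. Taking `y = y₀` gives `C`, because
`f(x;y₀)^α f(x;y₀)^β = f(x;y₀)^γ`. Conversely, Hölder's inequality with the weights `α/γ` and `β/γ`
bounds each integral by `(∫ ρ(x;y₀) f(x;y)^γ)^(α/γ) (∫ ρ(x;y₀) f(x;y₀)^γ)^(β/γ)`, which is at most
`∫ ρ(x;y₀) f(x;y₀)^γ = C` by the maximality hypothesis.
-/

open MeasureTheory ENNReal

/-- If for every `y₀` the integral `∫ ρ(x;y₀) f(x;y)^γ dμ` attains its supremum over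
`y ∈ Y` at `y = y₀`, and `∫ ρ(x;y) f(x;y)^γ dμ` does not depend on `y`, then
`sup_{y ∈ Y} ∫ ρ(x;y₀) f(x;y)^α f(x;y₀)^β dμ` is independent of `y₀`. -/
theorem stmt_1 {X : Type*} [MeasurableSpace X] (μ : Measure X) [SigmaFinite μ]
    {Y : Type*} (ρ f : X → Y → ℝ≥0∞)
    (hρ : ∀ y : Y, Measurable fun x => ρ x y)
    (hf : ∀ y : Y, Measurable fun x => f x y)
    (γ : ℝ) (hγ : 0 < γ)
    (α β : ℝ) (hα : 0 < α) (hβ : 0 ≤ β) (hαβ : α + β = γ)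
    (hsup : ∀ y₀ y : Y, ∫⁻ x, ρ x y₀ * f x y ^ γ ∂μ ≤ ∫⁻ x, ρ x y₀ * f x y₀ ^ γ ∂μ)
    (hconst : ∀ y₁ y₂ : Y, ∫⁻ x, ρ x y₁ * f x y₁ ^ γ ∂μ = ∫⁻ x, ρ x y₂ * f x y₂ ^ γ ∂μ) :
    ∀ y₁ y₂ : Y,
      (⨆ y : Y, ∫⁻ x, ρ x y₁ * f x y ^ α * f x y₁ ^ β ∂μ)
        = ⨆ y : Y, ∫⁻ x, ρ x y₂ * f x y ^ α * f x y₂ ^ β ∂μ := by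
  have hp : 0 ≤ α / γ := by positivity
  have hq : 0 ≤ β / γ := by positivity
  have hpq : α / γ + β / γ = 1 := by rw [← add_div, hαβ, div_self hγ.ne']
  have key : ∀ y₀ : Y, (⨆ y : Y, ∫⁻ x, ρ x y₀ * f x y ^ α * f x y₀ ^ β ∂μ)
      = ∫⁻ x, ρ x y₀ * f x y₀ ^ γ ∂μ := by
    intro y₀
    have hm : ∀ y, AEMeasurable (fun x => ρ x y₀ * f x y ^ γ) μ := fun y =>
      ((hρ y₀).mul ((hf y).pow_const γ)).aemeasurable
    apply le_antisymm
    · refine iSup_le fun y => ?_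
      calc ∫⁻ x, ρ x y₀ * f x y ^ α * f x y₀ ^ β ∂μ
          = ∫⁻ x, (ρ x y₀ * f x y ^ γ) ^ (α / γ) * (ρ x y₀ * f x y₀ ^ γ) ^ (β / γ) ∂μ := by
            refine lintegral_congr fun x => ?_
            rw [ENNReal.mul_rpow_of_nonneg _ _ hp, ENNReal.mul_rpow_of_nonneg _ _ hq,
              ← ENNReal.rpow_mul, ← ENNReal.rpow_mul, mul_div_cancel₀ _ hγ.ne',
              mul_div_cancel₀ _ hγ.ne', mul_mul_mul_comm, ← ENNReal.rpow_add_of_nonneg _ _ hp hq,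
              hpq, ENNReal.rpow_one, mul_assoc]
        _ ≤ (∫⁻ x, ρ x y₀ * f x y ^ γ ∂μ) ^ (α / γ)
              * (∫⁻ x, ρ x y₀ * f x y₀ ^ γ ∂μ) ^ (β / γ) :=
            ENNReal.lintegral_mul_norm_pow_le (hm y) (hm y₀) hp hq hpq
        _ ≤ (∫⁻ x, ρ x y₀ * f x y₀ ^ γ ∂μ) ^ (α / γ)
              * (∫⁻ x, ρ x y₀ * f x y₀ ^ γ ∂μ) ^ (β / γ) := by
            gcongr ?_ ^ _ * _
            exact hsup y₀ y
        _ = ∫⁻ x, ρ x y₀ * f x y₀ ^ γ ∂μ := by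
            rw [← ENNReal.rpow_add_of_nonneg _ _ hp hq, hpq, ENNReal.rpow_one]
    · refine le_iSup_of_le y₀ (le_of_eq (lintegral_congr fun x => ?_))
      rw [mul_assoc, ← ENNReal.rpow_add_of_nonneg _ _ hα.le hβ, hαβ]
  intro y₁ y₂
  rw [key, key, hconst y₁ y₂]
end

section
/- Let n ≥ 2, let e be a fixed unit vector in ℝⁿ, and let ρ and f be non-negative Lebesgue measurable functions on [-1, 1]. Let γ > 0 and suppose that the integral ∫_{S^{n-1}} ρ(⟨e_σ, e⟩) f(⟨e_σ, z⟩)^γ dσ, as a function of the unit vector z ∈ ℝⁿ, attains its supremum over {z : |z| = 1} at z = e. Then for every α ≥ 0 and β > 0 with α + β = γ, one has sup_{|z|=1} ∫_{S^{n-1}} ρ(⟨e_σ, e⟩) f(⟨e_σ, e⟩)^α f(⟨e_σ, z⟩)^β dσ = ∫_{S^{n-1}} ρ(⟨e_σ, e⟩) f(⟨e_σ, e⟩)^γ dσ. -/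
/-! Write `α = pγ`, `β = qγ` with `p + q = 1`. The mixed integrand is then the product of the `p`-th
power of `ρ(⟨e_σ,e⟩) f(⟨e_σ,e⟩)^γ` and the `q`-th power of `ρ(⟨e_σ,e⟩) f(⟨e_σ,z⟩)^γ`, so Hölder's
inequality and the maximality hypothesis bound its integral by `I^p I^q = I`, where `I` is the
integral at `z = e`. The choice `z = e` attains this bound. -/

open MeasureTheory ENNReal RealInnerProductSpace

/-- **Corollary 1**: extremal property of integrals over the unit sphere. If
`∫_{S^{n-1}} ρ(⟨e_σ,e⟩) f(⟨e_σ,z⟩)^γ dσ` attains its supremum over unit vectors `z` at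
`z = e`, then for `α ≥ 0`, `β > 0` with `α + β = γ`,
`sup_{|z|=1} ∫ ρ(⟨e_σ,e⟩) f(⟨e_σ,e⟩)^α f(⟨e_σ,z⟩)^β dσ = ∫ ρ(⟨e_σ,e⟩) f(⟨e_σ,e⟩)^γ dσ`. -/
theorem stmt_2 (n : ℕ) (hn : 2 ≤ n)
    (e : EuclideanSpace ℝ (Fin n)) (he : ‖e‖ = 1)
    (ρ f : ℝ → ℝ) (hρm : Measurable ρ) (hfm : Measurable f)
    (hρ0 : ∀ u ∈ Set.Icc (-1 : ℝ) 1, 0 ≤ ρ u) (hf0 : ∀ u ∈ Set.Icc (-1 : ℝ) 1, 0 ≤ f u)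
    (γ : ℝ) (hγ : 0 < γ)
    (hsup : ∀ z : EuclideanSpace ℝ (Fin n), ‖z‖ = 1 →
      (∫⁻ σ : Metric.sphere (0 : EuclideanSpace ℝ (Fin n)) 1,
          ENNReal.ofReal (ρ ⟪(σ : EuclideanSpace ℝ (Fin n)), e⟫) *
            ENNReal.ofReal (f ⟪(σ : EuclideanSpace ℝ (Fin n)), z⟫) ^ γ
          ∂(volume : Measure (EuclideanSpace ℝ (Fin n))).toSphere)
        ≤ ∫⁻ σ : Metric.sphere (0 : EuclideanSpace ℝ (Fin n)) 1,
            ENNReal.ofReal (ρ ⟪(σ : EuclideanSpace ℝ (Fin n)), e⟫) *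
              ENNReal.ofReal (f ⟪(σ : EuclideanSpace ℝ (Fin n)), e⟫) ^ γ
            ∂(volume : Measure (EuclideanSpace ℝ (Fin n))).toSphere)
    (α β : ℝ) (hα : 0 ≤ α) (hβ : 0 < β) (hαβ : α + β = γ) :
    (⨆ z : {z : EuclideanSpace ℝ (Fin n) // ‖z‖ = 1},
      ∫⁻ σ : Metric.sphere (0 : EuclideanSpace ℝ (Fin n)) 1,
        ENNReal.ofReal (ρ ⟪(σ : EuclideanSpace ℝ (Fin n)), e⟫) *
          ENNReal.ofReal (f ⟪(σ : EuclideanSpace ℝ (Fin n)), e⟫) ^ α *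
          ENNReal.ofReal (f ⟪(σ : EuclideanSpace ℝ (Fin n)), (z : EuclideanSpace ℝ (Fin n))⟫) ^ β
        ∂(volume : Measure (EuclideanSpace ℝ (Fin n))).toSphere)
      = ∫⁻ σ : Metric.sphere (0 : EuclideanSpace ℝ (Fin n)) 1,
          ENNReal.ofReal (ρ ⟪(σ : EuclideanSpace ℝ (Fin n)), e⟫) *
            ENNReal.ofReal (f ⟪(σ : EuclideanSpace ℝ (Fin n)), e⟫) ^ γ
          ∂(volume : Measure (EuclideanSpace ℝ (Fin n))).toSphere := by
  have hdir : ∀ z : EuclideanSpace ℝ (Fin n),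
      Measurable fun σ : Metric.sphere (0 : EuclideanSpace ℝ (Fin n)) 1 =>
        ⟪(σ : EuclideanSpace ℝ (Fin n)), z⟫ := fun z =>
    (continuous_subtype_val.inner continuous_const).measurable
  have hmeas : ∀ z : EuclideanSpace ℝ (Fin n),
      Measurable fun σ : Metric.sphere (0 : EuclideanSpace ℝ (Fin n)) 1 =>
        ENNReal.ofReal (ρ ⟪(σ : EuclideanSpace ℝ (Fin n)), e⟫) *
          ENNReal.ofReal (f ⟪(σ : EuclideanSpace ℝ (Fin n)), z⟫) ^ γ := fun z =>
    ((hρm.comp (hdir e)).ennreal_ofReal).mul (((hfm.comp (hdir z)).ennreal_ofReal).pow_const γ)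
  have hp : 0 ≤ α / γ := by positivity
  have hq : 0 ≤ β / γ := by positivity
  have hpq : α / γ + β / γ = 1 := by rw [← add_div, hαβ, div_self hγ.ne']
  have hpγ : γ * (α / γ) = α := mul_div_cancel₀ α hγ.ne'
  have hqγ : γ * (β / γ) = β := mul_div_cancel₀ β hγ.ne'
  apply le_antisymm
  · refine iSup_le fun ⟨z, hz⟩ => ?_
    calc _ = ∫⁻ σ : Metric.sphere (0 : EuclideanSpace ℝ (Fin n)) 1,
            (ENNReal.ofReal (ρ ⟪(σ : EuclideanSpace ℝ (Fin n)), e⟫) *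
              ENNReal.ofReal (f ⟪(σ : EuclideanSpace ℝ (Fin n)), e⟫) ^ γ) ^ (α / γ) *
            (ENNReal.ofReal (ρ ⟪(σ : EuclideanSpace ℝ (Fin n)), e⟫) *
              ENNReal.ofReal (f ⟪(σ : EuclideanSpace ℝ (Fin n)), z⟫) ^ γ) ^ (β / γ)
            ∂(volume : Measure (EuclideanSpace ℝ (Fin n))).toSphere := by
          refine lintegral_congr fun σ => ?_
          rw [ENNReal.mul_rpow_of_nonneg _ _ hp, ENNReal.mul_rpow_of_nonneg _ _ hq,
            ← ENNReal.rpow_mul, ← ENNReal.rpow_mul, hpγ, hqγ, mul_mul_mul_comm,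
            ← ENNReal.rpow_add_of_nonneg _ _ hp hq, hpq, ENNReal.rpow_one, mul_assoc]
      _ ≤ _ := ENNReal.lintegral_mul_norm_pow_le (hmeas e).aemeasurable (hmeas z).aemeasurable
          hp hq hpq
      _ ≤ _ := mul_le_mul_right (ENNReal.rpow_le_rpow (hsup z hz) hq) _
      _ = _ := by rw [← ENNReal.rpow_add_of_nonneg _ _ hp hq, hpq, ENNReal.rpow_one]
  · refine le_iSup_of_le ⟨e, he⟩ (le_of_eq (lintegral_congr fun σ => ?_))
    rw [mul_assoc, ← ENNReal.rpow_add_of_nonneg _ _ hα hβ.le, hαβ]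
end

section
/- Let n ≥ 2 and let e be a fixed unit vector in ℝⁿ. For κ, λ, μ ≥ 0 and 0 ≤ ν < 2, define for each unit vector z ∈ ℝⁿ the quantity F_{κ,λ,μ,ν}(z) = ∫_{S^{n-1}} ω_{κ,λ}(⟨e_σ, e⟩) |⟨e_σ, e⟩|^{μ+ν} |⟨e_σ, z⟩|^{2-ν} dσ. Then max_{|z|=1} F_{κ,λ,μ,ν}(z) = F_{κ,λ,μ,ν}(e) = ∫_{S^{n-1}} ω_{κ,λ}(⟨e_σ, e⟩) |⟨e_σ, e⟩|^{μ+2} dσ. -/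
/-!
Write the integrand as `g |⟨σ, e⟩| * h |⟨σ, z⟩|`, where `g t = ω_{κ,λ}(t) t ^ (μ + ν)` and
`h t = t ^ (2 - ν)` are both nondecreasing on `[0, ∞)`. The orthogonal reflection exchanging the
unit vectors `e` and `z` preserves the surface measure (`measurePreserving_sphereMap`), so with
`a = |⟨σ, e⟩|` and `b = |⟨σ, z⟩|` we have `∫ g(a) h(b) = ∫ g(b) h(a)` and
`∫ g(a) h(a) = ∫ g(b) h(b)`. Integrating Chebyshev's inequality `(g(a) - g(b)) (h(a) - h(b)) ≥ 0`
gives `∫ g(a) h(b) ≤ ∫ g(a) h(a)` (`integral_le_of_monotone`).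
The value at `e` is the addition of exponents `(μ + ν) + (2 - ν) = μ + 2`.
-/

open MeasureTheory ENNReal RealInnerProductSpace

/-- The function `ω_{κ,λ}(u) = ∫_{κ/u²}^∞ ξ^λ e^{-ξ} dξ = Γ(λ+1, κ/u²)` for `u ≠ 0`;
for `u = 0` it is `Γ(λ+1)` when `κ = 0` and `0` when `κ > 0`. -/
noncomputable def omegaKL (κ lam u : ℝ) : ℝ :=
  if u = 0 then (if κ = 0 then Real.Gamma (lam + 1) else 0)
  else ∫ ξ in Set.Ioi (κ / u ^ 2), ξ ^ lam * Real.exp (-ξ)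

section Sphere

open scoped Pointwise

variable {n : ℕ}

/-- The self-map of the unit sphere induced by a linear isometry of `ℝⁿ`. -/
noncomputable def sphereMap (R : EuclideanSpace ℝ (Fin n) ≃ₗᵢ[ℝ] EuclideanSpace ℝ (Fin n))
    (σ : Metric.sphere (0 : EuclideanSpace ℝ (Fin n)) 1) :
    Metric.sphere (0 : EuclideanSpace ℝ (Fin n)) 1 :=
  ⟨R σ, by simp⟩

/-- The surface measure is rotation invariant, because the measure of a subset of the sphere is a
multiple of the volume of the cone over it, and linear isometries preserve volume. -/
theorem measurePreserving_sphereMap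
    (R : EuclideanSpace ℝ (Fin n) ≃ₗᵢ[ℝ] EuclideanSpace ℝ (Fin n)) :
    MeasurePreserving (sphereMap R)
      (volume : Measure (EuclideanSpace ℝ (Fin n))).toSphere
      (volume : Measure (EuclideanSpace ℝ (Fin n))).toSphere := by
  have hm : Measurable (sphereMap R) :=
    (R.continuous.measurable.comp measurable_subtype_coe).subtype_mk
  refine ⟨hm, ?_⟩
  ext s hs
  rw [Measure.map_apply hm hs, Measure.toSphere_apply' _ (hm hs), Measure.toSphere_apply' _ hs]
  congr 1
  have key : Set.Ioo (0 : ℝ) 1 • (Subtype.val '' (sphereMap R ⁻¹' s))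
      = R ⁻¹' (Set.Ioo (0 : ℝ) 1 • (Subtype.val '' s)) := by
    ext x
    simp only [Set.mem_smul, Set.mem_preimage, Set.mem_image]
    constructor
    · rintro ⟨r, hr, _, ⟨σ, hσ, rfl⟩, rfl⟩
      exact ⟨r, hr, _, ⟨_, hσ, rfl⟩, by simp [sphereMap]⟩
    · rintro ⟨r, hr, _, ⟨τ, hτ, rfl⟩, hx⟩
      refine ⟨r, hr, _, ⟨sphereMap R.symm τ, ?_, rfl⟩, ?_⟩
      · have : sphereMap R (sphereMap R.symm τ) = τ := by
          ext1
          simp [sphereMap]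
        rw [this]
        exact hτ
      · apply R.injective
        simp [sphereMap, hx]
  rw [key]
  exact R.measurePreserving.measure_preimage_emb R.toHomeomorph.measurableEmbedding _

theorem integral_comp_sphereMap
    (R : EuclideanSpace ℝ (Fin n) ≃ₗᵢ[ℝ] EuclideanSpace ℝ (Fin n))
    {f : Metric.sphere (0 : EuclideanSpace ℝ (Fin n)) 1 → ℝ} (hf : Measurable f) :
    ∫ σ, f (sphereMap R σ) ∂(volume : Measure (EuclideanSpace ℝ (Fin n))).toSphere
      = ∫ σ, f σ ∂(volume : Measure (EuclideanSpace ℝ (Fin n))).toSphere := by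
  have h := measurePreserving_sphereMap R
  rw [← h.map_eq, integral_map h.measurable.aemeasurable hf.aestronglyMeasurable, h.map_eq]

theorem measurable_comp_abs_inner {g : ℝ → ℝ} (hg : Monotone g) (z : EuclideanSpace ℝ (Fin n)) :
    Measurable fun σ : Metric.sphere (0 : EuclideanSpace ℝ (Fin n)) 1 =>
      g |⟪(σ : EuclideanSpace ℝ (Fin n)), z⟫| := by
  refine hg.measurable.comp ?_
  exact Continuous.measurable (by fun_prop)

theorem abs_comp_abs_inner_le {g : ℝ → ℝ} (hg : Monotone g) {z : EuclideanSpace ℝ (Fin n)}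
    (hz : ‖z‖ = 1) (σ : Metric.sphere (0 : EuclideanSpace ℝ (Fin n)) 1) :
    |g (|⟪(σ : EuclideanSpace ℝ (Fin n)), z⟫|)| ≤ max |g 0| |g 1| := by
  have h1 : |⟪(σ : EuclideanSpace ℝ (Fin n)), z⟫| ≤ 1 := by
    have := abs_real_inner_le_norm (σ : EuclideanSpace ℝ (Fin n)) z
    rwa [hz, norm_eq_of_mem_sphere, one_mul] at this
  exact abs_le_max_abs_abs (hg (abs_nonneg _)) (hg h1)

theorem integrable_mul_abs_inner {g h : ℝ → ℝ} (hg : Monotone g) (hh : Monotone h)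
    {w z : EuclideanSpace ℝ (Fin n)} (hw : ‖w‖ = 1) (hz : ‖z‖ = 1) :
    Integrable (fun σ : Metric.sphere (0 : EuclideanSpace ℝ (Fin n)) 1 =>
      g |⟪(σ : EuclideanSpace ℝ (Fin n)), w⟫| * h |⟪(σ : EuclideanSpace ℝ (Fin n)), z⟫|)
      (volume : Measure (EuclideanSpace ℝ (Fin n))).toSphere := by
  refine Integrable.of_bound
    ((measurable_comp_abs_inner hg w).mul (measurable_comp_abs_inner hh z)).aestronglyMeasurable
    (max |g 0| |g 1| * max |h 0| |h 1|) (ae_of_all _ fun σ => ?_)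
  rw [Real.norm_eq_abs, abs_mul]
  exact mul_le_mul (abs_comp_abs_inner_le hg hw σ) (abs_comp_abs_inner_le hh hz σ)
    (abs_nonneg _) (le_max_of_le_left (abs_nonneg _))

/-- Chebyshev's inequality on the sphere, symmetrized by the reflection exchanging `e` and `z`. -/
theorem integral_le_of_monotone {g h : ℝ → ℝ} (hg : Monotone g) (hh : Monotone h)
    {e z : EuclideanSpace ℝ (Fin n)} (he : ‖e‖ = 1) (hz : ‖z‖ = 1) :
    ∫ σ : Metric.sphere (0 : EuclideanSpace ℝ (Fin n)) 1,
        g |⟪(σ : EuclideanSpace ℝ (Fin n)), e⟫| * h |⟪(σ : EuclideanSpace ℝ (Fin n)), z⟫|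
        ∂(volume : Measure (EuclideanSpace ℝ (Fin n))).toSphere
      ≤ ∫ σ : Metric.sphere (0 : EuclideanSpace ℝ (Fin n)) 1,
        g |⟪(σ : EuclideanSpace ℝ (Fin n)), e⟫| * h |⟪(σ : EuclideanSpace ℝ (Fin n)), e⟫|
        ∂(volume : Measure (EuclideanSpace ℝ (Fin n))).toSphere := by
  obtain ⟨R, hez, hze⟩ : ∃ R : EuclideanSpace ℝ (Fin n) ≃ₗᵢ[ℝ] EuclideanSpace ℝ (Fin n),
      R e = z ∧ R z = e := by
    have hez := Submodule.reflection_sub (he.trans hz.symm)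
    have hze := Submodule.reflection_reflection (ℝ ∙ (e - z))ᗮ e
    rw [hez] at hze
    exact ⟨_, hez, hze⟩
  have hRe : ∀ x, ⟪R x, e⟫ = ⟪x, z⟫ := fun x => by
    rw [← R.inner_map_map x z, hze]
  have hRz : ∀ x, ⟪R x, z⟫ = ⟪x, e⟫ := fun x => by
    rw [← R.inner_map_map x e, hez]
  have h1 := integral_comp_sphereMap R
    (f := fun σ => g |⟪(σ : EuclideanSpace ℝ (Fin n)), e⟫| *
      h |⟪(σ : EuclideanSpace ℝ (Fin n)), z⟫|)
    ((measurable_comp_abs_inner hg e).mul (measurable_comp_abs_inner hh z))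
  have h2 := integral_comp_sphereMap R
    (f := fun σ => g |⟪(σ : EuclideanSpace ℝ (Fin n)), e⟫| *
      h |⟪(σ : EuclideanSpace ℝ (Fin n)), e⟫|)
    ((measurable_comp_abs_inner hg e).mul (measurable_comp_abs_inner hh e))
  simp only [sphereMap, hRe, hRz] at h1 h2
  have hle := integral_mono
    ((integrable_mul_abs_inner hg hh he hz).add (integrable_mul_abs_inner hg hh hz he))
    ((integrable_mul_abs_inner hg hh he he).add (integrable_mul_abs_inner hg hh hz hz))
    (fun σ => by
      simp only [Pi.add_apply]
      rcases le_total |⟪(σ : EuclideanSpace ℝ (Fin n)), e⟫|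
        |⟪(σ : EuclideanSpace ℝ (Fin n)), z⟫| with hab | hab <;>
      nlinarith [hg hab, hh hab, mul_nonneg (sub_nonneg.2 (hg hab)) (sub_nonneg.2 (hh hab))])
  rw [integral_add' (integrable_mul_abs_inner hg hh he hz) (integrable_mul_abs_inner hg hh hz he),
    integral_add' (integrable_mul_abs_inner hg hh he he)
      (integrable_mul_abs_inner hg hh hz hz)] at hle
  linarith

end Sphere

section Omega

variable {κ lam : ℝ}

theorem integrableOn_rpow_mul_exp_neg (hlam : 0 ≤ lam) :
    IntegrableOn (fun ξ : ℝ => ξ ^ lam * Real.exp (-ξ)) (Set.Ioi 0) := by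
  simpa [mul_comm] using Real.GammaIntegral_convergent (s := lam + 1) (by linarith)

theorem omegaKL_nonneg (hκ : 0 ≤ κ) (hlam : 0 ≤ lam) (u : ℝ) : 0 ≤ omegaKL κ lam u := by
  unfold omegaKL
  split_ifs
  · exact (Real.Gamma_pos_of_pos (by linarith)).le
  · exact le_rfl
  · refine setIntegral_nonneg measurableSet_Ioi fun ξ hξ => ?_
    have : 0 < ξ := lt_of_le_of_lt (by positivity) hξ
    positivity

theorem omegaKL_mono (hκ : 0 ≤ κ) (hlam : 0 ≤ lam) {s t : ℝ} (hs : 0 ≤ s) (hst : s ≤ t) :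
    omegaKL κ lam s ≤ omegaKL κ lam t := by
  rcases hst.eq_or_lt with rfl | hlt
  · exact le_rfl
  have ht : t ≠ 0 := (hs.trans_lt hlt).ne'
  rcases hs.eq_or_lt with rfl | hs'
  · by_cases hk : κ = 0
    · subst hk
      simp only [omegaKL, ht, if_true, if_false, zero_div]
      rw [Real.Gamma_eq_integral (by linarith)]
      simp [mul_comm]
    · have := omegaKL_nonneg hκ hlam t
      simpa [omegaKL, hk] using this
  · simp only [omegaKL, ht, hs'.ne', if_false]
    have h0 : 0 ≤ κ / t ^ 2 := by positivity
    refine setIntegral_mono_set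
      ((integrableOn_rpow_mul_exp_neg hlam).mono_set (Set.Ioi_subset_Ioi h0)) ?_
      (Set.Ioi_subset_Ioi ?_).eventuallyLE
    · refine (ae_restrict_mem measurableSet_Ioi).mono fun ξ hξ => ?_
      have : 0 < ξ := lt_of_le_of_lt h0 hξ
      simp only [Pi.zero_apply]
      positivity
    · gcongr

end Omega

/-- **Lemma 1**: for `κ, λ, μ ≥ 0` and `0 ≤ ν < 2`, the function
`F_{κ,λ,μ,ν}(z) = ∫_{S^{n-1}} ω_{κ,λ}(⟨e_σ,e⟩)|⟨e_σ,e⟩|^{μ+ν}|⟨e_σ,z⟩|^{2-ν}dσ`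
attains its maximum over unit vectors `z` at `z = e`, with maximal value
`∫_{S^{n-1}} ω_{κ,λ}(⟨e_σ,e⟩)|⟨e_σ,e⟩|^{μ+2} dσ`. -/
theorem stmt_3 (n : ℕ) (hn : 2 ≤ n)
    (e : EuclideanSpace ℝ (Fin n)) (he : ‖e‖ = 1)
    (κ lam μ ν : ℝ) (hκ : 0 ≤ κ) (hlam : 0 ≤ lam) (hμ : 0 ≤ μ) (hν : 0 ≤ ν) (hν2 : ν < 2)
    (F : EuclideanSpace ℝ (Fin n) → ℝ)
    (hF : ∀ z : EuclideanSpace ℝ (Fin n),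
      F z = ∫ σ : Metric.sphere (0 : EuclideanSpace ℝ (Fin n)) 1,
        omegaKL κ lam ⟪(σ : EuclideanSpace ℝ (Fin n)), e⟫ *
          |⟪(σ : EuclideanSpace ℝ (Fin n)), e⟫| ^ (μ + ν) *
          |⟪(σ : EuclideanSpace ℝ (Fin n)), z⟫| ^ (2 - ν)
        ∂(volume : Measure (EuclideanSpace ℝ (Fin n))).toSphere) :
    (∀ z : EuclideanSpace ℝ (Fin n), ‖z‖ = 1 → F z ≤ F e) ∧
    F e = ∫ σ : Metric.sphere (0 : EuclideanSpace ℝ (Fin n)) 1,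
      omegaKL κ lam ⟪(σ : EuclideanSpace ℝ (Fin n)), e⟫ *
        |⟪(σ : EuclideanSpace ℝ (Fin n)), e⟫| ^ (μ + 2)
      ∂(volume : Measure (EuclideanSpace ℝ (Fin n))).toSphere := by
  -- Truncating at `0` turns monotonicity on `[0, ∞)` into monotonicity on `ℝ`.
  let g : ℝ → ℝ := fun t => omegaKL κ lam (max t 0) * (max t 0) ^ (μ + ν)
  let h : ℝ → ℝ := fun t => (max t 0) ^ (2 - ν)
  have hmax : Monotone fun t : ℝ => max t 0 := fun s t hst => max_le_max_right 0 hst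
  have hg : Monotone g := fun s t hst =>
    mul_le_mul (omegaKL_mono hκ hlam (le_max_right _ _) (hmax hst))
      (Real.rpow_le_rpow (le_max_right _ _) (hmax hst) (by linarith))
      (Real.rpow_nonneg (le_max_right _ _) _) (omegaKL_nonneg hκ hlam _)
  have hh : Monotone h := fun s t hst =>
    Real.rpow_le_rpow (le_max_right _ _) (hmax hst) (by linarith)
  have habs : ∀ u, omegaKL κ lam |u| = omegaKL κ lam u := fun u => by
    simp [omegaKL]
  have hmax_abs : ∀ u : ℝ, max |u| 0 = |u| := fun u => max_eq_left (abs_nonneg u)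
  have hF' : ∀ z, F z = ∫ σ : Metric.sphere (0 : EuclideanSpace ℝ (Fin n)) 1,
      g |⟪(σ : EuclideanSpace ℝ (Fin n)), e⟫| * h |⟪(σ : EuclideanSpace ℝ (Fin n)), z⟫|
      ∂(volume : Measure (EuclideanSpace ℝ (Fin n))).toSphere := fun z => by
    simp only [hF z, g, h, hmax_abs, habs]
  refine ⟨fun z hz => ?_, ?_⟩
  · rw [hF', hF']
    exact integral_le_of_monotone hg hh he hz
  · rw [hF]
    refine integral_congr_ae (ae_of_all _ fun σ => ?_)
    have hsum : μ + ν + (2 - ν) = μ + 2 := by ring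
    dsimp only
    -- The exponent `μ + 2` is nonzero, so the exponents add even where the base vanishes.
    rw [mul_assoc, ← Real.rpow_add' (abs_nonneg _) (by rw [hsum]; positivity), hsum]
end
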